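/- Let p be a prime. Suppose L ⊆ Z^{p-1} is a translate set for a tiling of Z^{p-1} by the semi-cross V = {0, e_1, ..., e_{p-1}}, and suppose 0 ∈ L. Then the number of elements of L of the form e_{i_1} + ... + e_{i_k} with i_1 < ... < i_k (all coordinates 0 or 1, exactly k ones) equals (C(p-1, k) + (p-1)(-1)^k)/p, for each 1 ≤ k < p. -/

import Mathlib

/-- A tiling of `ℤ^n` by translates of `V` with translate set `L`:
every point has a unique representation `v + l` with `v ∈ V`, `l ∈ L`. -/
def IsTiling {n : ℕ} (V L : Set (Fin n → ℤ)) : Prop :=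
  ∀ x : Fin n → ℤ, ∃! p : (Fin n → ℤ) × (Fin n → ℤ),
    p.1 ∈ V ∧ p.2 ∈ L ∧ p.1 + p.2 = x

/-- The semi-cross `{0, e_1, …, e_m}` in `ℤ^m`. -/
def semicross (m : ℕ) : Set (Fin m → ℤ) :=
  insert 0 (Set.range fun i : Fin m => Pi.single i 1)

/-- The set of elements of `L` of type `[1^k]`: exactly `k` coordinates equal `1`,
all others equal `0`. -/
def typeOneK {m : ℕ} (L : Set (Fin m → ℤ)) (k : ℕ) : Set (Fin m → ℤ) :=
  {x ∈ L | ∃ s : Finset (Fin m), s.card = k ∧ ∀ i, x i = if i ∈ s then 1 else 0}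

open Finset

/-- In a commutative ring, power sums of prime exponent `q` agree with `q`-th powers of sums
up to a multiple of `q`. -/
theorem exists_sum_pow_prime_eq {R ι : Type*} [CommRing R] {q : ℕ} (hq : q.Prime)
    (s : Finset ι) (a : ι → R) :
    ∃ r, ∑ i ∈ s, a i ^ q = (∑ i ∈ s, a i) ^ q + q * r := by
  classical
  induction s using Finset.induction_on with
  | empty => exact ⟨0, by simp [hq.ne_zero]⟩
  | insert i s hi ih =>
    obtain ⟨r, hr⟩ := ih
    obtain ⟨r', hr'⟩ := exists_add_pow_prime_eq hq (a i) (∑ j ∈ s, a j)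
    refine ⟨r - a i * (∑ j ∈ s, a j) * r', ?_⟩
    rw [sum_insert hi, sum_insert hi, hr, hr']
    ring

/-- The group ring `ℤ[G]` acting on integer-valued functions on `G` by translation. -/
noncomputable def translationAction (G : Type*) [AddCommGroup G] :
    AddMonoidAlgebra ℤ G →ₐ[ℤ] Module.End ℤ (G → ℤ) :=
  AddMonoidAlgebra.lift ℤ _ G
    { toFun := fun g => LinearMap.funLeft ℤ ℤ fun x => x - g.toAdd
      map_one' := by ext; simp [LinearMap.funLeft]
      map_mul' := fun g h => by
        ext f x
        simp [LinearMap.funLeft_apply, sub_sub] }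

section Translation

variable {G : Type*} [AddCommGroup G]

theorem translationAction_single (g : G) (f : G → ℤ) (x : G) :
    translationAction G (.single g 1) f x = f (x - g) := by
  simp [translationAction, LinearMap.funLeft_apply]

variable {ι : Type*} [Fintype ι]

theorem translationAction_sum_pow (d : ι → G) (j : ℕ) (f : G → ℤ) (x : G) :
    translationAction G (∑ i, (.single (d i) 1 : AddMonoidAlgebra ℤ G) ^ j) f x =
      ∑ i, f (x - j • d i) := by
  simp [AddMonoidAlgebra.single_pow, translationAction_single, -map_pow]

/-- A nonnegative function whose translates along `d` sum to `1` also has translates along every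
dilation `j • d`, with `j` coprime to the number of translates, that sum to `1`. -/
theorem translationAction_sum_pow_eq_one {d : ι → G} {f : G → ℤ} (hf : 0 ≤ f)
    (h1 : translationAction G (∑ i, .single (d i) 1) f = 1) {j : ℕ}
    (hj : j.Coprime (Fintype.card ι)) (hj0 : j ≠ 0) :
    translationAction G (∑ i, .single (d i) 1 ^ j) f = 1 := by
  have hone (j : ℕ) : translationAction G (∑ i, .single (d i) 1 ^ j) 1 =
      (Fintype.card ι : ℤ) • (1 : G → ℤ) := by
    ext x; rw [translationAction_sum_pow]; simp
  induction j using induction_on_primes with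
  | zero => exact absurd rfl hj0
  | one => simpa using h1
  | prime_mul q j hq ih =>
    obtain ⟨hqc, hjc⟩ := Nat.coprime_mul_iff_left.1 hj
    specialize ih hjc (by rintro rfl; simp at hj0)
    obtain ⟨r, hr⟩ := exists_sum_pow_prime_eq hq univ
      fun i => (.single (d i) 1 : AddMonoidAlgebra ℤ G) ^ j
    simp_rw [← pow_mul, mul_comm j q] at hr
    have hpow (n : ℕ) : translationAction G ((∑ i, .single (d i) 1 ^ j) ^ (n + 1)) f =
        (Fintype.card ι : ℤ) ^ n • (1 : G → ℤ) := by
      induction n with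
      | zero => simpa using ih
      | succ n ihn =>
        rw [pow_succ', map_mul, Module.End.mul_apply, ihn, map_zsmul, hone, smul_smul, pow_succ]
    have hpos (x : G) : 1 ≤ translationAction G (∑ i, .single (d i) 1 ^ (q * j)) f x := by
      have hnn : 0 ≤ translationAction G (∑ i, .single (d i) 1 ^ (q * j)) f x := by
        rw [translationAction_sum_pow]
        exact sum_nonneg fun i _ => hf _
      refine lt_of_le_of_ne hnn fun h => ?_
      obtain ⟨n, rfl⟩ := Nat.exists_eq_succ_of_ne_zero hq.ne_zero
      rw [hr, map_add, LinearMap.add_apply, hpow, map_mul, map_natCast] at h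
      simp only [ Pi.add_apply, Pi.smul_apply, Pi.one_apply, smul_eq_mul,
        mul_one, Module.End.mul_apply, Module.End.natCast_apply, nsmul_eq_mul] at h
      have hdvd : ((n + 1 : ℕ) : ℤ) ∣ ((Fintype.card ι : ℕ) : ℤ) ^ n :=
        ⟨-translationAction G r f x, by simp at h ⊢; linarith⟩
      have hdvd' : n + 1 ∣ Fintype.card ι ^ n := by exact_mod_cast hdvd
      have := hq.coprime_iff_not_dvd.1 hqc
      exact this (hq.dvd_of_dvd_pow hdvd')
    have hsum : translationAction G (∑ i, .single (d i) 1)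
        (translationAction G (∑ i, .single (d i) 1 ^ (q * j)) f) =
          (Fintype.card ι : ℤ) • (1 : G → ℤ) := by
      rw [← Module.End.mul_apply, ← map_mul, mul_comm, map_mul, Module.End.mul_apply, h1, hone]
    have : Nonempty ι := by
      by_contra h
      rw [not_nonempty_iff] at h
      simpa using congrFun h1 0
    ext x
    obtain ⟨i⟩ := this
    have hx := congrFun hsum (x + d i)
    set h := translationAction G (∑ i, .single (d i) 1 ^ (q * j)) f
    have hx' : ∑ k, h (x + d i - d k) = ∑ _k : ι, (1 : ℤ) := by
      simpa [translationAction_single] using hx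
    have := (sum_eq_sum_iff_of_le fun k _ => hpos (x + d i - d k)).1 hx'.symm i (mem_univ i)
    simpa using this.symm

/-- If every power sum of the translations `d` of exponent `j ∈ [1, k]` annihilates `g`, so does
their `k`-th elementary symmetric function. -/
theorem translationAction_esymm_eq_zero {d : ι → G} {g : G → ℤ} {k : ℕ} (hk : k ≠ 0)
    (h : ∀ j, j ≠ 0 → j ≤ k → translationAction G (∑ i, .single (d i) 1 ^ j) g = 0) :
    translationAction G ((univ.val.map fun i => .single (d i) 1).esymm k) g = 0 := by
  have hN := congrArg (MvPolynomial.aeval fun i => (.single (d i) 1 : AddMonoidAlgebra ℤ G))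
    (MvPolynomial.mul_esymm_eq_sum ι ℤ k)
  have hz := congrArg (fun a => translationAction G a g) hN
  simp only [map_mul, map_natCast, map_pow, map_sum, map_neg, map_one, MvPolynomial.psum,
    MvPolynomial.aeval_X, MvPolynomial.aeval_esymm_eq_multiset_esymm, Module.End.mul_apply,
    LinearMap.sum_apply] at hz
  rw [Module.End.natCast_apply, sum_eq_zero] at hz
  · exact (smul_eq_zero.1 hz).resolve_left hk
  · intro a ha
    rw [mem_filter, HasAntidiagonal.mem_antidiagonal] at ha
    have := h a.2 (by omega) (by omega)
    simp only [map_sum, map_pow, LinearMap.sum_apply] at this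
    simp only [← map_sum, this, map_zero]

end Translation

section Semicross

variable {m : ℕ}

/-- The elements of the semi-cross, indexed by `Option (Fin m)`. -/
def semicrossVec (m : ℕ) : Option (Fin m) → Fin m → ℤ :=
  fun o => o.elim 0 fun i => Pi.single i 1

theorem semicrossVec_injective : Function.Injective (semicrossVec m) := by
  have hne (i : Fin m) : (0 : Fin m → ℤ) ≠ Pi.single i 1 := fun h => by
    simpa using congrFun h i
  rintro (_ | i) (_ | j) h
  · rfl
  · exact absurd h (hne j)
  · exact absurd h.symm (hne i)
  · by_contra hij
    have := congrFun h i
    have hij' : i ≠ j := fun e => hij (e ▸ rfl)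
    simp [semicrossVec, hij'] at this

theorem range_semicrossVec : Set.range (semicrossVec m) = semicross m := by
  ext x
  simp [semicross, semicrossVec, Option.exists, eq_comm]

theorem IsTiling.sum_indicator_eq_one {L : Set (Fin m → ℤ)} (hT : IsTiling (semicross m) L)
    (x : Fin m → ℤ) : ∑ o, L.indicator (1 : (Fin m → ℤ) → ℤ) (x - semicrossVec m o) = 1 := by
  obtain ⟨⟨v, l⟩, ⟨hv, hl, hx⟩, huniq⟩ := hT x
  rw [← range_semicrossVec] at hv
  obtain ⟨o, rfl⟩ := hv
  dsimp only at hl hx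
  rw [sum_eq_single o]
  · rw [← hx, add_sub_cancel_left, Set.indicator_of_mem hl, Pi.one_apply]
  · intro o' _ ho'
    refine Set.indicator_of_notMem (fun hmem => ho' (semicrossVec_injective ?_)) _
    have := huniq (semicrossVec m o', x - semicrossVec m o')
      ⟨range_semicrossVec ▸ Set.mem_range_self o', hmem, add_sub_cancel _ _⟩
    exact congrArg Prod.fst this
  · simp

/-- The `0/1` vector supported on `s`. -/
def zeroOneVec (s : Finset (Fin m)) : Fin m → ℤ := fun i => if i ∈ s then 1 else 0

theorem sum_single_eq_zeroOneVec (s : Finset (Fin m)) :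
    ∑ i ∈ s, (Pi.single i 1 : Fin m → ℤ) = zeroOneVec s := by
  ext i
  simp [zeroOneVec, Finset.sum_apply, Pi.single_apply]

theorem zeroOneVec_injective : Function.Injective (zeroOneVec (m := m)) := by
  intro s t h
  ext i
  have := congrFun h i
  by_cases hs : i ∈ s <;> by_cases ht : i ∈ t <;> simp_all [zeroOneVec]

theorem zeroOneVec_univ_sub (s : Finset (Fin m)) :
    zeroOneVec univ - zeroOneVec s = zeroOneVec sᶜ := by
  ext i
  by_cases hs : i ∈ s <;> simp [zeroOneVec, hs]

theorem ncard_typeOneK (L : Set (Fin m → ℤ)) (k : ℕ) :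
    ((typeOneK L k).ncard : ℤ) =
      ∑ s ∈ powersetCard k univ, L.indicator (1 : (Fin m → ℤ) → ℤ) (zeroOneVec s) := by
  classical
  have : typeOneK L k =
      (((powersetCard k univ).filter fun s => zeroOneVec s ∈ L).image zeroOneVec :
        Finset (Fin m → ℤ)) := by
    ext x
    simp only [typeOneK, Set.mem_ofPred_eq, coe_image, coe_filter, mem_powersetCard_univ,
      Set.mem_image]
    constructor
    · rintro ⟨hx, s, hs, h⟩
      obtain rfl : zeroOneVec s = x := funext fun i => (h i).symm
      exact ⟨s, ⟨hs, hx⟩, rfl⟩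
    · rintro ⟨s, ⟨hs, hx⟩, rfl⟩
      exact ⟨hx, s, hs, fun i => rfl⟩
  rw [this, Set.ncard_coe_finset, card_image_of_injective _ zeroOneVec_injective, card_filter]
  simp [Set.indicator_apply]

theorem prod_single_eq_single_zeroOneVec (s : Finset (Fin m)) :
    ∏ i ∈ s, (.single (Pi.single i 1) 1 : AddMonoidAlgebra ℤ (Fin m → ℤ)) =
      .single (zeroOneVec s) 1 := by
  rw [← sum_single_eq_zeroOneVec]
  induction s using Finset.induction_on with
  | empty => rfl
  | insert i s hi ih => simp [prod_insert hi, sum_insert hi, ih, AddMonoidAlgebra.single_mul_single]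

theorem translationAction_esymm_single (k : ℕ) (f : (Fin m → ℤ) → ℤ) (x : Fin m → ℤ) :
    translationAction _ ((univ.val.map fun i : Fin m => .single (Pi.single i 1) 1).esymm k) f x =
      ∑ s ∈ powersetCard k univ, f (x - zeroOneVec s) := by
  rw [Finset.esymm_map_val]
  simp only [prod_single_eq_single_zeroOneVec, map_sum, LinearMap.sum_apply, Finset.sum_apply,
    translationAction_single]

theorem esymm_semicrossVec_succ (k : ℕ) :
    (univ.val.map fun o => (.single (semicrossVec m o) 1 : AddMonoidAlgebra ℤ _)).esymm (k + 1) =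
      (univ.val.map fun i : Fin m => .single (Pi.single i 1) 1).esymm (k + 1) +
        (univ.val.map fun i : Fin m => .single (Pi.single i 1) 1).esymm k := by
  have : (univ.val.map fun o => (.single (semicrossVec m o) 1 : AddMonoidAlgebra ℤ _)) =
      1 ::ₘ univ.val.map fun i : Fin m => .single (Pi.single i 1) 1 := by
    rw [univ_option]
    simp only [insertNone, OrderEmbedding.coe_ofMapLEIff, cons_val, Multiset.map_cons, map_val,
      Multiset.map_map]
    rfl
  simp only [this, Multiset.esymm, Multiset.powersetCard_cons, Multiset.map_add, Multiset.sum_add,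
    Multiset.map_map, Function.comp_def, Multiset.prod_cons, one_mul]

/-- On a function annihilated by all power sums of the semi-cross translations, translating by
all `0/1` vectors of weight `k` amounts to multiplication by `(-1) ^ k`. -/
theorem sum_sub_zeroOneVec {g : (Fin m → ℤ) → ℤ}
    (hg : ∀ j, j ≠ 0 → j ≤ m → translationAction _ (∑ o, .single (semicrossVec m o) 1 ^ j) g = 0)
    {k : ℕ} (hk : k ≤ m) (x : Fin m → ℤ) :
    ∑ s ∈ powersetCard k univ, g (x - zeroOneVec s) = (-1) ^ k * g x := by
  rw [← translationAction_esymm_single]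
  induction k with
  | zero => simp [Multiset.esymm]
  | succ k ih =>
    have h := congrFun (translationAction_esymm_eq_zero k.succ_ne_zero
      fun j hj hjk => hg j hj (hjk.trans hk)) x
    rw [esymm_semicrossVec_succ, map_add, LinearMap.add_apply, Pi.add_apply, ih (by omega),
      Pi.zero_apply] at h
    rw [pow_succ]
    linarith

theorem IsTiling.succ_mul_ncard_typeOneK {L : Set (Fin m → ℤ)} (hp : (m + 1).Prime)
    (hT : IsTiling (semicross m) L) (h0 : 0 ∈ L) {k : ℕ} (hk : k ≤ m) :
    ((m : ℤ) + 1) * ((typeOneK L k).ncard : ℤ) = (m.choose k : ℤ) + m * (-1) ^ k := by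
  set f : (Fin m → ℤ) → ℤ := L.indicator 1 with hf
  set g : (Fin m → ℤ) → ℤ := ((m : ℤ) + 1) • f - 1 with hgdef
  have hf0 : 0 ≤ f := Set.indicator_nonneg fun _ _ => zero_le_one
  have hf1 : translationAction _ (∑ o, .single (semicrossVec m o) 1) f = 1 := by
    ext x
    simpa [translationAction_single] using hT.sum_indicator_eq_one x
  have hg (j : ℕ) (hj : j ≠ 0) (hjm : j ≤ m) :
      translationAction _ (∑ o, .single (semicrossVec m o) 1 ^ j) g = 0 := by
    have hcop : j.Coprime (Fintype.card (Option (Fin m))) := by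
      simpa using (Nat.coprime_of_lt_prime hj (by omega) hp).symm
    have h1 := translationAction_sum_pow_eq_one hf0 hf1 hcop hj
    ext x
    rw [hgdef, map_sub, map_zsmul, h1, Pi.sub_apply, translationAction_sum_pow]
    simp
  have key {k : ℕ} (hk : k ≤ m) : ∑ s ∈ powersetCard k univ, g (zeroOneVec s) =
      (-1) ^ (m - k) * g (zeroOneVec univ) := by
    rw [← sum_sub_zeroOneVec hg (Nat.sub_le m k)]
    refine sum_nbij' compl compl ?_ ?_ ?_ ?_ ?_
    · intro s hs
      rw [mem_powersetCard_univ] at hs ⊢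
      rw [card_compl, hs, Fintype.card_fin]
    · intro s hs
      rw [mem_powersetCard_univ] at hs ⊢
      rw [card_compl, hs, Fintype.card_fin, Nat.sub_sub_self hk]
    · simp
    · simp
    · intro s _
      rw [zeroOneVec_univ_sub, compl_compl]
  have hzero : g (zeroOneVec ∅) = m := by
    have : zeroOneVec (∅ : Finset (Fin m)) = 0 := by ext; simp [zeroOneVec]
    simp [hgdef, hf, this, h0]
  have hk0 := key (Nat.zero_le m)
  rw [powersetCard_zero, sum_singleton, hzero, Nat.sub_zero] at hk0
  have hkk : ((m : ℤ) + 1) * ((typeOneK L k).ncard : ℤ) - m.choose k =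
      (-1) ^ (m - k) * g (zeroOneVec univ) := by
    rw [← key hk, ncard_typeOneK]
    simp [hgdef, hf, sum_sub_distrib, mul_sum]
  obtain ⟨j, rfl⟩ := Nat.exists_eq_add_of_le hk
  have hsq : ((-1 : ℤ) ^ k) * (-1) ^ k = 1 := by rw [← mul_pow]; simp
  rw [Nat.add_sub_cancel_left] at hkk
  rw [pow_add] at hk0
  linear_combination hkk - (-1) ^ k * hk0 - (-1) ^ j * g (zeroOneVec univ) * hsq

end Semicross

theorem stmt_13 (p : ℕ) (hp : p.Prime) (L : Set (Fin (p - 1) → ℤ))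
    (hT : IsTiling (semicross (p - 1)) L) (h0 : (0 : Fin (p - 1) → ℤ) ∈ L)
    (k : ℕ) (hk1 : 1 ≤ k) (hk : k < p) :
    (p : ℤ) * ((typeOneK L k).ncard : ℤ) =
      (Nat.choose (p - 1) k : ℤ) + (p - 1 : ℤ) * (-1) ^ k := by
  obtain ⟨m, rfl⟩ := Nat.exists_eq_succ_of_ne_zero hp.ne_zero
  simpa using hT.succ_mul_ncard_typeOneK hp h0 (Nat.le_of_lt_succ hk)
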